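/- Let R be a 3-dimensional regular local ring with m = (x, y, z), and I the ideal of maximal minors of ((x, y, z), (y, z, x²)). Then for every n ≥ 1, length_R(I^{(n)}/Iⁿ) = (1/2)C(n+2,3) − (1/4)C(n+1,2) − (1/8)n − 1/8 if n is even, and (1/2)C(n+2,3) − (1/4)C(n+1,2) − (1/8)n if n is odd. Equivalently, length_R(I^{(n)}/Iⁿ) = Σ_{k=1}^{⌊n/2⌋} C(n − 2k + 2, 2). -/

import Mathlib

open IsLocalRing

/-- The `n`-th symbolic power `I⁽ⁿ⁾ = ⋂_{p ∈ Min(R/I)} (IⁿR_p ∩ R)`. -/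
noncomputable def symbolicPower {R : Type*} [CommRing R] (I : Ideal R) (n : ℕ) : Ideal R :=
  ⨅ p : I.minimalPrimes,
    haveI : Ideal.IsPrime (p : Ideal R) := p.2.1.1
    Ideal.comap (algebraMap R (Localization.AtPrime (p : Ideal R)))
      (Ideal.map (algebraMap R (Localization.AtPrime (p : Ideal R))) (I ^ n))

/-- `M` has (finite) length `n` over `R`: there is a composition series from
`⊥` to `⊤` of length `n`. -/
def HasLength (R M : Type*) [CommRing R] [AddCommGroup M] [Module R M] (n : ℕ) : Prop :=
  ∃ s : CompositionSeries (Submodule R M), s.head = ⊥ ∧ s.last = ⊤ ∧ s.length = n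

/-- If adding an element `t` to `J` gives a prime ideal that is not minimal over `J`, then `J` is
prime. -/
theorem isPrime_of_isPrime_sup_span_singleton {R : Type*} [CommRing R] [IsNoetherianRing R]
    [IsLocalRing R] {J : Ideal R} {t : R} (ht : t ∈ maximalIdeal R)
    (hP : (J ⊔ Ideal.span {t}).IsPrime) (hmin : J ⊔ Ideal.span {t} ∉ J.minimalPrimes) :
    J.IsPrime := by
  obtain ⟨q, hq, hqP⟩ := Ideal.exists_minimalPrimes_le (le_sup_left : J ≤ J ⊔ Ideal.span {t})
  have hJq : J ≤ q := hq.1.2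
  have hqprime : q.IsPrime := hq.1.1
  have htq : t ∉ q := by
    intro h
    refine hmin ?_
    rwa [← le_antisymm hqP (sup_le hJq ((Ideal.span_singleton_le_iff_mem _).2 h))]
  have hle : q ≤ J := by
    refine Submodule.le_of_le_smul_of_le_jacobson_bot (I := maximalIdeal R)
      (IsNoetherian.noetherian q) (IsLocalRing.maximalIdeal_le_jacobson _) ?_
    intro s hs
    obtain ⟨j, hj, v, hv, rfl⟩ := Submodule.mem_sup.1 (hqP hs)
    obtain ⟨u, rfl⟩ := Ideal.mem_span_singleton.1 hv
    have h1 : t * u ∈ q := (Ideal.add_mem_iff_right _ (hJq hj)).1 hs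
    have hu : u ∈ q := (hqprime.mem_or_mem h1).resolve_left htq
    exact Submodule.add_mem_sup hj (Submodule.smul_mem_smul ht hu)
  rwa [le_antisymm hJq hle]

theorem ringKrullDim_le_length_of_ofList_eq {R : Type*} [CommRing R] [IsNoetherianRing R]
    [IsLocalRing R] {l : List R} (hl : Ideal.ofList l = maximalIdeal R) :
    ringKrullDim R ≤ l.length := by
  refine (ringKrullDim_le_spanFinrank_maximalIdeal R).trans ?_
  have h : (Ideal.ofList l).spanFinrank ≤ l.length := by
    classical
    have hs : {r | r ∈ l} = (l.toFinset : Set R) := by ext; simp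
    refine (Submodule.spanFinrank_span_le_ncard_of_finite (hs ▸ Finset.finite_toSet _)).trans ?_
    rw [hs, Set.ncard_coe_finset]
    exact l.toFinset_card_le
  rw [← hl]
  exact_mod_cast h

theorem natCast_le_ringKrullDim_quotient_span_singleton {R : Type*} [CommRing R]
    [IsNoetherianRing R] [IsLocalRing R] {x : R} (hx : x ∈ maximalIdeal R) {d : ℕ}
    (hd : ((d + 1 : ℕ) : WithBot ℕ∞) ≤ ringKrullDim R) :
    (d : WithBot ℕ∞) ≤ ringKrullDim (R ⧸ Ideal.span {x}) := by
  have h := hd.trans (ringKrullDim_le_ringKrullDim_quotient_add_encard {x}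
    (by simpa [IsLocalRing.ringJacobson_eq_maximalIdeal] using hx))
  rw [Set.encard_singleton] at h
  generalize ringKrullDim (R ⧸ Ideal.span {x}) = e at h ⊢
  cases e with
  | bot => exact absurd h (by rw [WithBot.bot_add, le_bot_iff]; exact WithBot.coe_ne_bot)
  | coe e =>
    have h' : ((d + 1 : ℕ) : ℕ∞) ≤ e + 1 := WithBot.coe_le_coe.1 h
    have h'' : (d : ℕ∞) ≤ e := by
      cases e with
      | top => exact le_top
      | coe e => norm_cast at h' ⊢; omega
    exact WithBot.coe_le_coe.2 h''

theorem isLocalRing_quotient_span_singleton {R : Type*} [CommRing R] [IsLocalRing R] {x : R}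
    (hx : x ∈ maximalIdeal R) : IsLocalRing (R ⧸ Ideal.span {x}) :=
  haveI : Nontrivial (R ⧸ Ideal.span {x}) := Ideal.Quotient.nontrivial_iff.2
    (ne_top_of_le_ne_top (Ideal.IsPrime.ne_top' (I := maximalIdeal R))
      ((Ideal.span_singleton_le_iff_mem _).2 hx))
  .of_surjective' (Ideal.Quotient.mk _) Ideal.Quotient.mk_surjective

theorem ofList_map_mk_eq_maximalIdeal {R : Type*} [CommRing R] [IsLocalRing R] {x : R} {l : List R}
    [IsLocalRing (R ⧸ Ideal.span {x})] (hl : Ideal.ofList (x :: l) = maximalIdeal R) :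
    Ideal.ofList (l.map (Ideal.Quotient.mk (Ideal.span {x}))) =
      maximalIdeal (R ⧸ Ideal.span {x}) := by
  rw [← Ideal.map_ofList, ← IsLocalRing.map_maximalIdeal_of_surjective
    (Ideal.Quotient.mk (Ideal.span {x})) Ideal.Quotient.mk_surjective, ← hl,
    Ideal.ofList_cons, Ideal.map_sup]
  simp [Ideal.map_span]

/-- A Noetherian local ring of dimension at least `d` whose maximal ideal is generated by `d`
elements is a domain. -/
theorem isPrime_bot_of_ofList_eq {R : Type*} [CommRing R] [IsNoetherianRing R] [IsLocalRing R]
    {l : List R} (hl : Ideal.ofList l = maximalIdeal R) (hd : l.length ≤ ringKrullDim R) :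
    (⊥ : Ideal R).IsPrime := by
  induction hn : l.length generalizing R with
  | zero =>
    obtain rfl := List.length_eq_zero_iff.1 hn
    rw [Ideal.ofList_nil] at hl
    rw [hl]
    infer_instance
  | succ n ih =>
    have quot : ∀ (x : R) (l' : List R), Ideal.ofList (x :: l') = maximalIdeal R →
        l'.length = n → (Ideal.span {x}).IsPrime := by
      intro x l' hl' hn'
      have hx : x ∈ maximalIdeal R := hl' ▸ Ideal.subset_span (by simp)
      have := isLocalRing_quotient_span_singleton hx
      rw [← Ideal.mk_ker (I := Ideal.span {x}), RingHom.ker_eq_comap_bot]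
      have h := ih (R := R ⧸ Ideal.span {x}) (l := l'.map (Ideal.Quotient.mk _)) ?_ ?_ (by simpa)
      · exact Ideal.comap_isPrime _ _
      · exact ofList_map_mk_eq_maximalIdeal hl'
      · rw [List.length_map, hn']
        exact natCast_le_ringKrullDim_quotient_span_singleton hx (hn ▸ hd)
    match l, hn with
    | [x], _ =>
      have hx : Ideal.span {x} = maximalIdeal R := by simpa using hl
      refine isPrime_of_isPrime_sup_span_singleton (t := x)
        (hx ▸ Ideal.mem_span_singleton_self x) (by rw [bot_sup_eq, hx]; infer_instance) ?_
      rw [bot_sup_eq, hx]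
      intro hmin
      have h0 : (maximalIdeal R).height = 0 := Ideal.height_eq_zero_iff.2 hmin
      rw [← IsLocalRing.maximalIdeal_height_eq_ringKrullDim, h0] at hd
      exact absurd hd (by simp)
    | x :: y :: l', hn =>
      have hxm : x ∈ maximalIdeal R := hl ▸ Ideal.subset_span (by simp)
      have hym : y ∈ maximalIdeal R := hl ▸ Ideal.subset_span (by simp)
      have hgen : ∀ i : ℕ, Ideal.ofList ((x + y ^ (i + 1)) :: y :: l') = maximalIdeal R := by
        intro i
        rw [← hl]
        simp only [Ideal.ofList_cons]
        rw [← sup_assoc, ← sup_assoc, ← Ideal.span_insert, ← Ideal.span_insert, pow_succ,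
          Ideal.span_pair_add_mul_right]
      have hprime : ∀ i : ℕ, (Ideal.span {x + y ^ (i + 1)}).IsPrime := fun i ↦
        quot _ _ (hgen i) (by simpa using hn)
      have hmem : ∀ i : ℕ, x + y ^ (i + 1) ∈ maximalIdeal R := fun i ↦
        add_mem hxm (Ideal.pow_mem_of_mem _ hym _ (by omega))
      have hy : ∀ i : ℕ, y ∉ Ideal.span {x + y ^ (i + 1)} := by
        intro i hyi
        have h1 : Ideal.ofList ((x + y ^ (i + 1)) :: l') = maximalIdeal R := by
          rw [← hgen i, Ideal.ofList_cons, Ideal.ofList_cons, Ideal.ofList_cons, ← sup_assoc]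
          rw [sup_eq_left.2 ((Ideal.span_singleton_le_iff_mem _).2 hyi)]
        have h2 := hd.trans (ringKrullDim_le_length_of_ofList_eq h1)
        simp only [List.length_cons] at h2
        norm_cast at h2
        omega
      by_contra hbot
      have hall : ∀ i : ℕ, Ideal.span {x + y ^ (i + 1)} ∈ (⊥ : Ideal R).minimalPrimes := by
        intro i
        by_contra hi
        refine hbot (isPrime_of_isPrime_sup_span_singleton (hmem i) ?_ ?_)
        · rw [bot_sup_eq]; exact hprime i
        · rwa [bot_sup_eq]
      have := ((⊥ : Ideal R).finite_minimalPrimes_of_isNoetherianRing).to_subtype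
      obtain ⟨i, j, hij, he⟩ := Finite.exists_ne_map_eq_of_infinite
        (fun i : ℕ ↦ (⟨_, hall i⟩ : (⊥ : Ideal R).minimalPrimes))
      have he' : Ideal.span {x + y ^ (i + 1)} = Ideal.span {x + y ^ (j + 1)} :=
        congrArg Subtype.val he
      wlog hlt : i < j generalizing i j
      · exact this j i hij.symm he.symm he'.symm (by omega)
      obtain ⟨k, rfl⟩ := Nat.exists_eq_add_of_lt hlt
      have h1 : y ^ (i + 1) * (1 - y ^ (k + 1)) ∈ Ideal.span {x + y ^ (i + 1)} := by
        have h2 := sub_mem (Ideal.mem_span_singleton_self (x + y ^ (i + 1)))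
          (he' ▸ Ideal.mem_span_singleton_self (x + y ^ (i + k + 1 + 1)))
        convert h2 using 1
        ring
      have hu : IsUnit (1 - y ^ (k + 1)) := by
        by_contra hnu
        have h3 := add_mem ((IsLocalRing.mem_maximalIdeal _).2 hnu)
          (Ideal.pow_mem_of_mem _ hym (k + 1) (by omega))
        rw [sub_add_cancel] at h3
        exact (Ideal.ne_top_iff_one _).1 (Ideal.IsPrime.ne_top' (I := maximalIdeal R)) h3
      exact hy i ((hprime i).mem_of_pow_mem _ ((Ideal.mul_unit_mem_iff_mem _ hu).1 h1))

/-- In a regular local ring, part of a regular system of parameters generates a prime ideal. -/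
theorem isPrime_ofList_of_ofList_append_eq {R : Type*} [CommRing R] [IsNoetherianRing R]
    [IsLocalRing R] {l₁ l₂ : List R} (hl : Ideal.ofList (l₁ ++ l₂) = maximalIdeal R)
    (hd : (l₁ ++ l₂).length ≤ ringKrullDim R) : (Ideal.ofList l₁).IsPrime := by
  induction hn : l₁.length generalizing R with
  | zero =>
    obtain rfl := List.length_eq_zero_iff.1 hn
    rw [Ideal.ofList_nil]
    exact isPrime_bot_of_ofList_eq hl hd
  | succ n ih =>
    match l₁, hn with
    | x :: l, hn =>
      have hx : x ∈ maximalIdeal R := hl ▸ Ideal.subset_span (by simp)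
      have := isLocalRing_quotient_span_singleton hx
      have h := ih (R := R ⧸ Ideal.span {x}) (l₁ := l.map (Ideal.Quotient.mk _))
        (l₂ := l₂.map (Ideal.Quotient.mk _)) ?_ ?_ (by simpa using hn)
      · have h' := Ideal.comap_isPrime (Ideal.Quotient.mk (Ideal.span {x}))
          (Ideal.ofList (l.map (Ideal.Quotient.mk (Ideal.span {x}))))
        rwa [← Ideal.map_ofList, Ideal.comap_map_of_surjective' _ Ideal.Quotient.mk_surjective,
          Ideal.mk_ker, sup_comm, ← Ideal.ofList_cons] at h'
      · rw [← List.map_append]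
        exact ofList_map_mk_eq_maximalIdeal hl
      · rw [← List.map_append, List.length_map]
        exact natCast_le_ringKrullDim_quotient_span_singleton hx hd

/-- The `2 × 2` minors `a`, `b`, `c` of the matrix with rows `(x, y, z)` and `(y, z, x²)`, the
element `d` with `x d = b² - a c`, and the properties of this system that determine the symbolic
powers of `(a, b, c)`. -/
structure IsPfaffianSystem {R : Type*} [CommRing R] [IsLocalRing R] (x y z a b c d : R) :
    Prop where
  maximalIdeal_eq : maximalIdeal R = Ideal.span {x, y, z}
  row_one : x * a + y * b + z * c = 0
  row_two : y * a + z * b + x ^ 2 * c = 0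
  x_mul_d : x * d = b ^ 2 - a * c
  y_mul_d : y * d = x * c ^ 2 - a * b
  z_mul_d : z * d = a ^ 2 - x * b * c
  le_maximalIdeal : Ideal.span {a, b, c} ≤ maximalIdeal R
  d_mem : d ∈ Ideal.span {a, b, c}
  c_ne_zero : c ≠ 0
  d_ne_zero : d ≠ 0
  mem_of_mul_a_pow : ∀ n r s t, r * a ^ n = b * s + c * t → r ∈ Ideal.span {x, y}
  c_dvd_of_dvd_x_mul : ∀ r, c ∣ x * r → c ∣ r
  exists_of_x_dvd : ∀ s u, x ∣ d * s + c * u → ∃ p q, s = x * p + c * q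
  mem_of_x_mul_mem : ∀ r, x * r ∈ Ideal.span {a, b, c} → r ∈ Ideal.span {a, b, c}
  le_of_isPrime : ∀ q : Ideal R, q.IsPrime → Ideal.span {a, b, c} ≤ q → x ∈ q →
    maximalIdeal R ≤ q

theorem isPfaffianSystem_of_ringKrullDim_eq_three {R : Type*} [CommRing R] [IsNoetherianRing R]
    [IsLocalRing R] (hdim : ringKrullDim R = 3) (x y z : R)
    (hreg : maximalIdeal R = Ideal.span {x, y, z}) :
    IsDomain R ∧ IsPfaffianSystem x y z (x ^ 2 * y - z ^ 2) (y * z - x ^ 3) (x * z - y ^ 2)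
      (x ^ 5 - 3 * x ^ 2 * y * z + x * y ^ 3 + z ^ 3) := by
  have hl : Ideal.ofList [x, y, z] = maximalIdeal R := by
    rw [hreg, Ideal.ofList]
    congr 1
    ext; simp
  have hd : ∀ l : List R, l.length = 3 → (l.length : WithBot ℕ∞) ≤ ringKrullDim R := by
    intro l hl
    rw [hl, hdim]
    rfl
  have dim_le : ∀ l : List R, l.length ≤ 2 → Ideal.ofList l ≠ maximalIdeal R := by
    intro l hl h
    have h2 := ringKrullDim_le_length_of_ofList_eq h
    rw [hdim] at h2
    have h3 : 3 ≤ l.length := by exact_mod_cast h2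
    omega
  have prime_xy : (Ideal.span {x, y}).IsPrime := by
    have h := isPrime_ofList_of_ofList_append_eq (l₁ := [x, y]) (l₂ := [z]) hl (hd _ rfl)
    rwa [Ideal.ofList_cons, Ideal.ofList_singleton, ← Ideal.span_insert] at h
  have prime_x : (Ideal.span {x}).IsPrime := by
    have h := isPrime_ofList_of_ofList_append_eq (l₁ := [x]) (l₂ := [y, z]) hl (hd _ rfl)
    rwa [Ideal.ofList_singleton] at h
  have hbot : (⊥ : Ideal R).IsPrime := isPrime_bot_of_ofList_eq hl (hd _ rfl)
  have hdom : IsDomain R := IsDomain.of_bot_isPrime R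
  have z_notMem : z ∉ Ideal.span {x, y} := by
    intro h
    refine dim_le [x, y] le_rfl ?_
    rw [Ideal.ofList_cons, Ideal.ofList_singleton, ← Ideal.span_insert, hreg]
    refine le_antisymm (Ideal.span_mono (by intro; simp; tauto)) (Ideal.span_le.2 ?_)
    rintro w (rfl | rfl | rfl)
    · exact Ideal.subset_span (by simp)
    · exact Ideal.subset_span (by simp)
    · exact h
  have y_notMem : y ∉ Ideal.span {x} := by
    intro h
    refine dim_le [x, z] le_rfl ?_
    rw [Ideal.ofList_cons, Ideal.ofList_singleton, ← Ideal.span_insert, hreg]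
    refine le_antisymm (Ideal.span_mono (by intro; simp; tauto)) (Ideal.span_le.2 ?_)
    rintro w (rfl | rfl | rfl)
    · exact Ideal.subset_span (by simp)
    · exact Ideal.span_mono (by simp) h
    · exact Ideal.subset_span (by simp)
  have x_ne : x ≠ 0 := by
    rintro rfl
    refine dim_le [y, z] le_rfl ?_
    rw [← hl, Ideal.ofList_cons (r := (0 : R))]
    simp
  have dvd_of_y : ∀ r, x ∣ y * r → x ∣ r := by
    intro r hr
    rw [← Ideal.mem_span_singleton] at hr ⊢
    exact (prime_x.mem_or_mem hr).resolve_left y_notMem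
  have of_z : ∀ r, (∃ n, z ^ n * r ∈ Ideal.span {x, y}) → ∃ p q, r = x * p + y * q := by
    rintro r ⟨n, hr⟩
    obtain ⟨p, q, h⟩ := Ideal.mem_span_pair.1
      ((prime_xy.mem_or_mem hr).resolve_left fun h ↦ z_notMem (prime_xy.mem_of_pow_mem _ h))
    exact ⟨p, q, by rw [← h]; ring⟩
  have x_dvd_of_c : ∀ s, x ∣ (x * z - y ^ 2) * s → x ∣ s := by
    rintro s ⟨t, ht⟩
    exact dvd_of_y _ (dvd_of_y _ ⟨z * s - t, by linear_combination -ht⟩)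
  have le_prime : ∀ q : Ideal R, q.IsPrime →
      Ideal.span {x ^ 2 * y - z ^ 2, y * z - x ^ 3, x * z - y ^ 2} ≤ q → x ∈ q →
      maximalIdeal R ≤ q := by
    intro q hq hI hx
    rw [hreg, Ideal.span_le]
    rintro w (rfl | rfl | rfl)
    · exact hx
    · refine hq.mem_of_pow_mem 2 ?_
      have h : x * z - w ^ 2 ∈ q := hI (Ideal.subset_span (by simp))
      have h' := sub_mem (q.mul_mem_right z hx) h
      rwa [sub_sub_cancel] at h'
    · refine hq.mem_of_pow_mem 2 ?_
      have h : x ^ 2 * y - w ^ 2 ∈ q := hI (Ideal.subset_span (by simp))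
      have h' := sub_mem (q.mul_mem_right (x * y) hx) h
      convert h' using 1
      ring
  have hx_mem : x ∈ maximalIdeal R := hreg ▸ Ideal.subset_span (by simp)
  have hy_mem : y ∈ maximalIdeal R := hreg ▸ Ideal.subset_span (by simp)
  have hz_mem : z ∈ maximalIdeal R := hreg ▸ Ideal.subset_span (by simp)
  refine ⟨hdom, ⟨hreg, by ring, by ring, by ring, by ring, by ring, ?_, ?_, ?_, ?_, ?_, ?_, ?_, ?_,
    le_prime⟩⟩
  · rw [Ideal.span_le]
    rintro w (rfl | rfl | rfl)
    · exact sub_mem (Ideal.mul_mem_left _ _ hy_mem) (Ideal.pow_mem_of_mem _ hz_mem _ (by omega))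
    · exact sub_mem (Ideal.mul_mem_left _ _ hz_mem) (Ideal.pow_mem_of_mem _ hx_mem _ (by omega))
    · exact sub_mem (Ideal.mul_mem_left _ _ hz_mem) (Ideal.pow_mem_of_mem _ hy_mem _ (by omega))
  · exact Submodule.mem_span_triple.2 ⟨-z, -x ^ 2, -x * y, by simp only [smul_eq_mul]; ring⟩
  · intro h
    refine y_notMem (prime_x.mem_of_pow_mem 2 (Ideal.mem_span_singleton.2 ⟨z, ?_⟩))
    linear_combination -h
  · intro h
    refine z_notMem (prime_xy.mem_of_pow_mem 3 (Ideal.mem_span_pair.2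
      ⟨-(x ^ 4 - 3 * x * y * z + y ^ 3), 0, ?_⟩))
    linear_combination -h
  · intro n r s t h
    have ha : x ^ 2 * y - z ^ 2 ∉ Ideal.span {x, y} := by
      intro h
      refine z_notMem (prime_xy.mem_of_pow_mem 2 ?_)
      have h' := sub_mem ((Ideal.span {x, y}).mul_mem_left (x ^ 2)
        (Ideal.subset_span (by simp : y ∈ ({x, y} : Set R)))) h
      rwa [sub_sub_cancel] at h'
    refine (prime_xy.mem_or_mem (y := (x ^ 2 * y - z ^ 2) ^ n) ?_).resolve_right
      fun h ↦ ha (prime_xy.mem_of_pow_mem _ h)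
    rw [h]
    exact Ideal.mem_span_pair.2 ⟨-x ^ 2 * s + z * t, z * s - y * t, by ring⟩
  · rintro r ⟨s, hs⟩
    obtain ⟨t, rfl⟩ := x_dvd_of_c s ⟨r, hs.symm⟩
    exact ⟨t, mul_left_cancel₀ x_ne (by linear_combination hs)⟩
  · rintro s u ⟨t, ht⟩
    obtain ⟨s₁, s₂, rfl⟩ := of_z s ⟨3, Ideal.mem_span_pair.2
      ⟨t - (x ^ 4 - 3 * x * y * z + y ^ 3) * s - z * u, y * u, by linear_combination -ht⟩⟩
    have h : x ∣ z ^ 3 * s₂ - y * u := by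
      refine dvd_of_y _ ⟨t - (x ^ 4 - 3 * x * y * z + y ^ 3) * (x * s₁ + y * s₂) - z * u
        - z ^ 3 * s₁, ?_⟩
      linear_combination ht
    obtain ⟨v, hv⟩ := h
    obtain ⟨s₃, s₄, rfl⟩ := of_z s₂ ⟨3, Ideal.mem_span_pair.2 ⟨v, u, by linear_combination -hv⟩⟩
    exact ⟨s₁ + y * s₃ + z * s₄, -s₄, by ring⟩
  · intro r hr
    obtain ⟨u, v, w, h⟩ := Submodule.mem_span_triple.1 hr
    simp only [smul_eq_mul] at h
    obtain ⟨u₁, u₂, rfl⟩ := of_z u ⟨2, Ideal.mem_span_pair.2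
      ⟨x * y * u - v * x ^ 2 + w * z - r, v * z - w * y, by linear_combination h⟩⟩
    have h₁ : x * (r - u₁ * (x ^ 2 * y - z ^ 2) + u₂ * x * (x * z - y ^ 2)) =
        (v - u₂ * z) * (y * z - x ^ 3) + w * (x * z - y ^ 2) := by linear_combination -h
    generalize v - u₂ * z = v' at h₁
    generalize hr' : r - u₁ * (x ^ 2 * y - z ^ 2) + u₂ * x * (x * z - y ^ 2) = r' at h₁
    have h₂ : x ∣ v' * z - w * y :=
      dvd_of_y _ ⟨r' + v' * x ^ 2 - w * z, by linear_combination -h₁⟩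
    obtain ⟨e, he⟩ := h₂
    obtain ⟨v₁, v₂, rfl⟩ := of_z v' ⟨1, Ideal.mem_span_pair.2 ⟨e, w, by linear_combination -he⟩⟩
    have h₃ : x * (r' - v₁ * (y * z - x ^ 3) + v₂ * (x ^ 2 * y - z ^ 2)) =
        (x * z - y ^ 2) * (w - v₂ * z) := by linear_combination h₁
    obtain ⟨f, hf⟩ := x_dvd_of_c _ ⟨_, h₃.symm⟩
    rw [hf] at h₃
    have h₄ := mul_left_cancel₀ x_ne (h₃.trans (mul_left_comm _ _ _))
    refine Submodule.mem_span_triple.2 ⟨u₁ - v₂, v₁, f - u₂ * x, ?_⟩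
    simp only [smul_eq_mul]
    linear_combination -h₄ - hr'

theorem Ideal.sup_pow_succ {R : Type*} [CommRing R] (A B : Ideal R) (n : ℕ) :
    (A ⊔ B) ^ (n + 1) = A ^ (n + 1) ⊔ B * (A ⊔ B) ^ n := by
  induction n with
  | zero => simp
  | succ n ih =>
    apply le_antisymm
    · conv_lhs => rw [pow_succ', Ideal.sup_mul]
      refine sup_le ?_ le_sup_right
      conv_lhs => rw [ih, Ideal.mul_sup]
      refine sup_le_sup (pow_succ' A (n + 1)).ge ?_
      rw [mul_left_comm, pow_succ' (A ⊔ B)]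
      exact Ideal.mul_mono_right (Ideal.mul_mono_left le_sup_left)
    · refine sup_le (Ideal.pow_right_mono le_sup_left _) ?_
      rw [pow_succ' (A ⊔ B) (n + 1)]
      exact Ideal.mul_mono_left le_sup_right

theorem Ideal.mul_span_triple_pow_succ {R : Type*} [CommRing R] (a b c : R) (Q : Ideal R)
    (n : ℕ) : Q * Ideal.span {a, b, c} ^ (n + 1) =
    Q * Ideal.span {a, b} ^ (n + 1) ⊔ Ideal.span {c} * (Q * Ideal.span {a, b, c} ^ n) := by
  have hI : Ideal.span {a, b, c} = Ideal.span {a, b} ⊔ Ideal.span {c} := by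
    rw [← Ideal.span_union, Set.insert_union, Set.singleton_union]
  rw [hI, Ideal.sup_pow_succ, Ideal.mul_sup, mul_left_comm]

theorem Ideal.exists_of_mem_mul_span_pair_pow_succ {R : Type*} [CommRing R] {a b : R}
    {Q : Ideal R} {n : ℕ} {w : R} (hw : w ∈ Q * Ideal.span {a, b} ^ (n + 1)) :
    ∃ q ∈ Q, ∃ t ∈ Q * Ideal.span {a, b} ^ n, w = q * a ^ (n + 1) + b * t := by
  rw [Ideal.span_insert, Ideal.sup_pow_succ, Ideal.mul_sup, mul_left_comm,
    Ideal.span_singleton_pow, mul_comm Q, ← Ideal.span_insert] at hw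
  obtain ⟨u, hu, v, hv, rfl⟩ := Submodule.mem_sup.1 hw
  obtain ⟨q, hq, rfl⟩ := Ideal.mem_span_singleton_mul.1 hu
  obtain ⟨t, ht, rfl⟩ := Ideal.mem_span_singleton_mul.1 hv
  exact ⟨q, hq, t, ht, by ring⟩

namespace IsPfaffianSystem

variable {R : Type*} [CommRing R] [IsLocalRing R] {x y z a b c d : R}

variable (h : IsPfaffianSystem x y z a b c d)

include h

theorem x_mem : x ∈ maximalIdeal R := h.maximalIdeal_eq ▸ Ideal.subset_span (by simp)

theorem y_mem : y ∈ maximalIdeal R := h.maximalIdeal_eq ▸ Ideal.subset_span (by simp)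

theorem z_mem : z ∈ maximalIdeal R := h.maximalIdeal_eq ▸ Ideal.subset_span (by simp)

theorem b_mem : b ∈ maximalIdeal R := h.le_maximalIdeal (Ideal.subset_span (by simp))

theorem c_mem : c ∈ maximalIdeal R := h.le_maximalIdeal (Ideal.subset_span (by simp))

theorem maximalIdeal_mul_d_le : maximalIdeal R * Ideal.span {d} ≤ Ideal.span {a, b, c} ^ 2 := by
  have ha : a ∈ Ideal.span {a, b, c} := Ideal.subset_span (by simp)
  have hb : b ∈ Ideal.span {a, b, c} := Ideal.subset_span (by simp)
  have hc : c ∈ Ideal.span {a, b, c} := Ideal.subset_span (by simp)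
  rw [mul_comm, Ideal.span_singleton_mul_le_iff, h.maximalIdeal_eq]
  intro w hw
  obtain ⟨p, q, r, rfl⟩ := Submodule.mem_span_triple.1 hw
  have key : d * (p • x + q • y + r • z) =
      p * (b * b - a * c) + q * (x * (c * c) - a * b) + r * (a * a - x * (b * c)) := by
    simp only [smul_eq_mul]
    linear_combination p * h.x_mul_d + q * h.y_mul_d + r * h.z_mul_d
  rw [key, pow_two]
  have hm := fun {u v : R} (hu : u ∈ Ideal.span {a, b, c}) (hv : v ∈ Ideal.span {a, b, c}) ↦
    Ideal.mul_mem_mul hu hv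
  exact add_mem (add_mem (Ideal.mul_mem_left _ _ (sub_mem (hm hb hb) (hm ha hc)))
    (Ideal.mul_mem_left _ _ (sub_mem (Ideal.mul_mem_left _ _ (hm hc hc)) (hm ha hb))))
    (Ideal.mul_mem_left _ _ (sub_mem (hm ha ha) (Ideal.mul_mem_left _ _ (hm hb hc))))

theorem sq_le : Ideal.span {a, b, c} ^ 2 ≤
    Ideal.span {d} * maximalIdeal R ⊔ Ideal.span {c} * Ideal.span {a, b, c} := by
  have key : ∀ w, ∀ u ∈ maximalIdeal R, ∀ p q r : R, w = d * u + c * (p * a + q * b + r * c) →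
      w ∈ Ideal.span {d} * maximalIdeal R ⊔ Ideal.span {c} * Ideal.span {a, b, c} := by
    rintro _ u hu p q r rfl
    exact Submodule.add_mem_sup (Ideal.mul_mem_mul (Ideal.mem_span_singleton_self d) hu)
      (Ideal.mul_mem_mul (Ideal.mem_span_singleton_self c)
        (Submodule.mem_span_triple.2 ⟨p, q, r, rfl⟩))
  have hy := neg_mem h.y_mem
  rw [pow_two, Ideal.span_mul_span', Ideal.span_le]
  rintro _ ⟨u, hu, v, hv, rfl⟩
  change u * v ∈ _
  simp only [Set.mem_insert_iff, Set.mem_singleton_iff] at hu hv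
  rcases hu with rfl | rfl | rfl <;> rcases hv with rfl | rfl | rfl
  · exact key _ z h.z_mem 0 x 0 (by linear_combination -h.z_mul_d)
  · exact key _ (-y) hy 0 0 x (by linear_combination h.y_mul_d)
  · exact key _ 0 (zero_mem _) 1 0 0 (by ring)
  · exact key _ (-y) hy 0 0 x (by linear_combination h.y_mul_d)
  · exact key _ x h.x_mem 1 0 0 (by linear_combination -h.x_mul_d)
  · exact key _ 0 (zero_mem _) 0 1 0 (by ring)
  · exact key _ 0 (zero_mem _) 1 0 0 (by ring)
  · exact key _ 0 (zero_mem _) 0 1 0 (by ring)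
  · exact key _ 0 (zero_mem _) 0 0 1 (by ring)

theorem pow_add_two_le (n : ℕ) : Ideal.span {a, b, c} ^ (n + 2) ≤
    Ideal.span {d} * (maximalIdeal R * Ideal.span {a, b, c} ^ n) ⊔
      Ideal.span {c} * Ideal.span {a, b, c} ^ (n + 1) := by
  rw [pow_succ' _ n, ← mul_assoc, ← mul_assoc, ← Ideal.sup_mul, add_comm n 2, pow_add]
  exact Ideal.mul_mono_left h.sq_le

/-- Modulo `c`, a multiple of `a` by an element of `(x, y)` is a multiple of `b`. -/
theorem exists_mul_a_eq {q : R} (hq : q ∈ Ideal.span {x, y}) :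
    ∃ s ∈ maximalIdeal R, ∃ t ∈ maximalIdeal R, q * a = b * s + c * t := by
  obtain ⟨u, v, rfl⟩ := Ideal.mem_span_pair.1 hq
  have hm := fun (r : R) {w : R} (hw : w ∈ maximalIdeal R) ↦ (maximalIdeal R).mul_mem_left r hw
  refine ⟨-u * y + -v * z, add_mem (hm _ h.y_mem) (hm _ h.z_mem),
    -u * z + (-v * x) * x, add_mem (hm _ h.z_mem) (hm _ h.x_mem), ?_⟩
  linear_combination u * h.row_one + v * h.row_two

theorem c_dvd_of_dvd_d_mul [IsNoetherianRing R] [IsDomain R] {r : R} (hr : c ∣ d * r) :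
    c ∣ r := by
  let K : Ideal R := (Ideal.span {c}).colon {d}
  have hK : ∀ {s}, s ∈ K ↔ c ∣ d * s := fun {s} ↦ by
    rw [Submodule.mem_colon_singleton, Ideal.mem_span_singleton, smul_eq_mul, mul_comm]
  have hle : K ≤ Ideal.span {c} := by
    refine Submodule.le_of_le_smul_of_le_jacobson_bot (I := maximalIdeal R)
      (IsNoetherian.noetherian K) (IsLocalRing.maximalIdeal_le_jacobson _) ?_
    intro s hs
    obtain ⟨u, hu⟩ := hK.1 hs
    obtain ⟨p, q, rfl⟩ := h.exists_of_x_dvd s (-u) ⟨0, by linear_combination hu⟩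
    rw [add_comm]
    refine Submodule.add_mem_sup (Ideal.mem_span_singleton.2 (dvd_mul_right _ _))
      (Submodule.smul_mem_smul h.x_mem (hK.2 ?_))
    exact h.c_dvd_of_dvd_x_mul _ ⟨u - d * q, by linear_combination hu⟩
  exact Ideal.mem_span_singleton.1 (hle (hK.2 hr))

theorem c_dvd_of_dvd_b_mul [IsNoetherianRing R] [IsDomain R] {r : R} (hr : c ∣ b * r) :
    c ∣ r := by
  obtain ⟨s, hs⟩ := hr
  refine h.c_dvd_of_dvd_d_mul (h.c_dvd_of_dvd_x_mul _ ⟨b * s - a * r, ?_⟩)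
  linear_combination r * h.x_mul_d + b * hs

theorem exists_of_c_dvd [IsNoetherianRing R] [IsDomain R] {Q : Ideal R}
    (hQ : maximalIdeal R ≤ Q) {n : ℕ} {w : R} (hw : w ∈ Q * Ideal.span {a, b} ^ (n + 1))
    (hc : c ∣ w) : ∃ t ∈ Q * Ideal.span {a, b} ^ n, c ∣ t ∧
      ∃ s ∈ Q * Ideal.span {a, b, c} ^ n, w = b * t + c * s := by
  obtain ⟨q, hq, t, ht, rfl⟩ := Ideal.exists_of_mem_mul_span_pair_pow_succ hw
  obtain ⟨e, he⟩ := hc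
  obtain ⟨u, hu, v, hv, huv⟩ := h.exists_mul_a_eq
    (h.mem_of_mul_a_pow (n + 1) q (-t) e (by linear_combination he))
  have ha : a ^ n ∈ Ideal.span {a, b} ^ n := Ideal.pow_mem_pow (Ideal.subset_span (by simp)) n
  have ha' : a ^ n ∈ Ideal.span {a, b, c} ^ n :=
    Ideal.pow_mem_pow (Ideal.subset_span (by simp)) n
  exact ⟨u * a ^ n + t, add_mem (Ideal.mul_mem_mul (hQ hu) ha) ht,
    h.c_dvd_of_dvd_b_mul ⟨e - v * a ^ n, by linear_combination he - a ^ n * huv⟩,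
    v * a ^ n, Ideal.mul_mem_mul (hQ hv) ha', by linear_combination a ^ n * huv⟩

theorem b_mul_mem_of_c_dvd [IsNoetherianRing R] [IsDomain R] {Q : Ideal R}
    (hQ : maximalIdeal R ≤ Q) {n : ℕ} {w : R} (hw : w ∈ Q * Ideal.span {a, b} ^ n) (hc : c ∣ w) :
    b * w ∈ Ideal.span {c} * (Q * Ideal.span {a, b, c} ^ n) := by
  induction n generalizing w with
  | zero =>
    obtain ⟨s, rfl⟩ := hc
    rw [pow_zero, mul_one]
    exact Ideal.mem_span_singleton_mul.2 ⟨b * s, Ideal.mul_mem_right _ _ (hQ h.b_mem), by ring⟩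
  | succ n ih =>
    obtain ⟨t, ht, htc, s, hs, rfl⟩ := h.exists_of_c_dvd hQ hw hc
    have hb : b ∈ Ideal.span {a, b, c} := Ideal.subset_span (by simp)
    have := Ideal.mul_mem_mul hb (add_mem (ih ht htc)
      (Ideal.mul_mem_mul (Ideal.mem_span_singleton_self c) hs))
    rwa [mul_left_comm, mul_left_comm _ Q, ← pow_succ'] at this

theorem mem_of_c_dvd [IsNoetherianRing R] [IsDomain R] {Q : Ideal R}
    (hQ : maximalIdeal R ≤ Q) {n : ℕ} {w : R} (hw : w ∈ Q * Ideal.span {a, b} ^ (n + 1))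
    (hc : c ∣ w) : w ∈ Ideal.span {c} * (Q * Ideal.span {a, b, c} ^ n) := by
  obtain ⟨t, ht, htc, s, hs, rfl⟩ := h.exists_of_c_dvd hQ hw hc
  exact add_mem (h.b_mul_mem_of_c_dvd hQ ht htc)
    (Ideal.mul_mem_mul (Ideal.mem_span_singleton_self c) hs)

/-- With `I = (a, b, c)`, multiplication by `c` from `R / Q I ^ n` to `R / Q I ^ (n + 1)` is
injective. -/
theorem mem_mul_pow_of_c_mul_mem [IsNoetherianRing R] [IsDomain R] {Q : Ideal R}
    (hQ : maximalIdeal R ≤ Q) {n : ℕ} {r : R}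
    (hr : c * r ∈ Q * Ideal.span {a, b, c} ^ (n + 1)) : r ∈ Q * Ideal.span {a, b, c} ^ n := by
  rw [Ideal.mul_span_triple_pow_succ] at hr
  obtain ⟨w, hw, v, hv, hwv⟩ := Submodule.mem_sup.1 hr
  have hcw : c ∣ w := by
    obtain ⟨s, -, rfl⟩ := Ideal.mem_span_singleton_mul.1 hv
    exact ⟨r - s, by linear_combination hwv⟩
  obtain ⟨s, hs, hsw⟩ := Ideal.mem_span_singleton_mul.1
    (hwv ▸ add_mem (h.mem_of_c_dvd hQ hw hcw) hv)
  rwa [← mul_left_cancel₀ h.c_ne_zero hsw]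

theorem mem_pow_of_c_mul_mem [IsNoetherianRing R] [IsDomain R] {n : ℕ} {r : R}
    (hr : c * r ∈ Ideal.span {a, b, c} ^ (n + 1)) : r ∈ Ideal.span {a, b, c} ^ n := by
  simpa using h.mem_mul_pow_of_c_mul_mem (Q := ⊤) le_top (by simpa using hr)

theorem d_mul_mem_pow_iff [IsNoetherianRing R] [IsDomain R] {n : ℕ} {r : R} :
    d * r ∈ Ideal.span {a, b, c} ^ (n + 2) ↔ r ∈ maximalIdeal R * Ideal.span {a, b, c} ^ n := by
  constructor
  · intro hr
    induction n generalizing r with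
    | zero =>
      obtain ⟨_, hu, _, hv, huv⟩ := Submodule.mem_sup.1 (h.pow_add_two_le 0 hr)
      obtain ⟨t, ht, rfl⟩ := Ideal.mem_span_singleton_mul.1 hu
      obtain ⟨u, -, rfl⟩ := Ideal.mem_span_singleton_mul.1 hv
      obtain ⟨s, hs⟩ := h.c_dvd_of_dvd_d_mul (r := r - t) ⟨u, by linear_combination -huv⟩
      rw [pow_zero, mul_one] at ht ⊢
      rw [← sub_add_cancel r t, hs]
      exact add_mem (Ideal.mul_mem_right _ _ h.c_mem) ht
    | succ n ih =>
      obtain ⟨_, hu, _, hv, huv⟩ := Submodule.mem_sup.1 (h.pow_add_two_le (n + 1) hr)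
      obtain ⟨t, ht, rfl⟩ := Ideal.mem_span_singleton_mul.1 hu
      obtain ⟨u, hu', rfl⟩ := Ideal.mem_span_singleton_mul.1 hv
      obtain ⟨s, hs⟩ := h.c_dvd_of_dvd_d_mul (r := r - t) ⟨u, by linear_combination -huv⟩
      have hds : d * s = u := mul_left_cancel₀ h.c_ne_zero (by linear_combination -huv - d * hs)
      have hc : c ∈ Ideal.span {a, b, c} := Ideal.subset_span (by simp)
      rw [← sub_add_cancel r t, hs]
      refine add_mem ?_ ht
      rw [pow_succ', mul_left_comm]
      exact Ideal.mul_mem_mul hc (ih (hds ▸ hu'))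
  · intro hr
    have := Ideal.mul_mem_mul (Ideal.mem_span_singleton_self d) hr
    rw [← mul_assoc, mul_comm (Ideal.span {d})] at this
    rw [add_comm, pow_add]
    exact Ideal.mul_mono_left h.maximalIdeal_mul_d_le this

end IsPfaffianSystem

/-- The ideals `L₀ = R`, `L₁ = I`, `Lₙ₊₂ = d Lₙ + I ^ (n + 2)`. -/
def pfaffianFiltration {R : Type*} [CommRing R] (I : Ideal R) (d : R) : ℕ → Ideal R
  | 0 => ⊤
  | 1 => I
  | n + 2 => Ideal.span {d} * pfaffianFiltration I d n ⊔ I ^ (n + 2)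

section

variable {R : Type*} [CommRing R] {I : Ideal R} {d : R}

theorem mem_pfaffianFiltration_add_two {n : ℕ} {r : R} : r ∈ pfaffianFiltration I d (n + 2) ↔
    ∃ s ∈ pfaffianFiltration I d n, ∃ w ∈ I ^ (n + 2), r = d * s + w := by
  constructor
  · intro hr
    obtain ⟨_, hv, w, hw, rfl⟩ := Submodule.mem_sup.1 hr
    obtain ⟨s, hs, rfl⟩ := Ideal.mem_span_singleton_mul.1 hv
    exact ⟨s, hs, w, hw, rfl⟩
  · rintro ⟨s, hs, w, hw, rfl⟩
    exact Submodule.add_mem_sup (Ideal.mul_mem_mul (Ideal.mem_span_singleton_self d) hs) hw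

theorem pow_le_pfaffianFiltration (n : ℕ) : I ^ n ≤ pfaffianFiltration I d n := by
  match n with
  | 0 => exact le_top
  | 1 => exact (pow_one I).le
  | n + 2 => exact le_sup_right

theorem mul_mem_pfaffianFiltration_succ {c : R} (hc : c ∈ I) {n : ℕ} {r : R}
    (hr : r ∈ pfaffianFiltration I d n) : c * r ∈ pfaffianFiltration I d (n + 1) := by
  induction n using Nat.twoStepInduction generalizing r with
  | zero => exact I.mul_mem_right r hc
  | one =>
    refine mem_pfaffianFiltration_add_two.2 ⟨0, zero_mem _, c * r, ?_, by ring⟩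
    rw [pow_two]
    exact Ideal.mul_mem_mul hc hr
  | more n ih _ =>
    obtain ⟨s, hs, w, hw, rfl⟩ := mem_pfaffianFiltration_add_two.1 hr
    refine mem_pfaffianFiltration_add_two.2 ⟨c * s, ih hs, c * w, ?_, by ring⟩
    rw [pow_succ']
    exact Ideal.mul_mem_mul hc hw

theorem pow_mul_pfaffianFiltration_le {m : Ideal R} (hm : m * Ideal.span {d} ≤ I ^ 2) (n : ℕ) :
    m ^ n * pfaffianFiltration I d n ≤ I ^ n := by
  induction n using Nat.twoStepInduction with
  | zero => simp
  | one => exact Ideal.mul_le_right.trans (pow_one I).ge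
  | more n ih _ =>
    rw [pfaffianFiltration, Ideal.mul_sup]
    refine sup_le ?_ Ideal.mul_le_right
    calc m ^ (n + 2) * (Ideal.span {d} * pfaffianFiltration I d n)
        = m * (m * Ideal.span {d}) * (m ^ n * pfaffianFiltration I d n) := by ring
      _ ≤ I ^ 2 * I ^ n := Ideal.mul_mono (Ideal.mul_le_right.trans hm) ih
      _ = I ^ (n + 2) := by rw [add_comm n 2, pow_add]

end

namespace IsPfaffianSystem

variable {R : Type*} [CommRing R] [IsLocalRing R] {x y z a b c d : R}
  (h : IsPfaffianSystem x y z a b c d)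

include h

theorem mem_pfaffianFiltration_of_c_mul_mem [IsNoetherianRing R] [IsDomain R]
    {n : ℕ} {r : R} (hr : c * r ∈ pfaffianFiltration (Ideal.span {a, b, c}) d (n + 1)) :
    r ∈ pfaffianFiltration (Ideal.span {a, b, c}) d n := by
  have hc : c ∈ Ideal.span {a, b, c} := Ideal.subset_span (by simp)
  induction n using Nat.twoStepInduction generalizing r with
  | zero => trivial
  | one =>
    obtain ⟨s, -, w, hw, hsw⟩ := mem_pfaffianFiltration_add_two.1 hr
    obtain ⟨_, hdt, _, hcw, rfl⟩ := Submodule.mem_sup.1 (h.pow_add_two_le 0 hw)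
    obtain ⟨t, -, rfl⟩ := Ideal.mem_span_singleton_mul.1 hdt
    obtain ⟨w', hw', rfl⟩ := Ideal.mem_span_singleton_mul.1 hcw
    obtain ⟨v, hv⟩ := h.c_dvd_of_dvd_d_mul (r := s + t) ⟨r - w', by linear_combination -hsw⟩
    have hr' : r = v * d + w' :=
      mul_left_cancel₀ h.c_ne_zero (by linear_combination hsw + d * hv)
    rw [hr']
    rw [zero_add, pow_one] at hw'
    exact add_mem (Ideal.mul_mem_left _ _ h.d_mem) hw'
  | more n ih _ =>
    obtain ⟨s, hs, w, hw, hsw⟩ := mem_pfaffianFiltration_add_two.1 hr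
    obtain ⟨_, hdt, _, hcw, rfl⟩ := Submodule.mem_sup.1 (h.pow_add_two_le (n + 1) hw)
    obtain ⟨t, ht, rfl⟩ := Ideal.mem_span_singleton_mul.1 hdt
    obtain ⟨w', hw', rfl⟩ := Ideal.mem_span_singleton_mul.1 hcw
    obtain ⟨v, hv⟩ := h.c_dvd_of_dvd_d_mul (r := s + t) ⟨r - w', by linear_combination -hsw⟩
    have hst := add_mem hs (pow_le_pfaffianFiltration (d := d) _ (Ideal.mul_le_right ht))
    rw [hv] at hst
    exact mem_pfaffianFiltration_add_two.2 ⟨v, ih hst, w', hw',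
      mul_left_cancel₀ h.c_ne_zero (by linear_combination hsw + d * hv)⟩

theorem mem_pfaffianFiltration_sup_of_x_mul_mem {n : ℕ} {r : R}
    (hr : x * r ∈ pfaffianFiltration (Ideal.span {a, b, c}) d n ⊔ Ideal.span {c}) :
    r ∈ pfaffianFiltration (Ideal.span {a, b, c}) d n ⊔ Ideal.span {c} := by
  have hc : Ideal.span {c} ≤ Ideal.span {a, b, c} := Ideal.span_mono (by simp)
  induction n using Nat.twoStepInduction generalizing r with
  | zero => simp [pfaffianFiltration]
  | one =>
    rw [pfaffianFiltration, sup_eq_left.2 hc] at hr ⊢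
    exact h.mem_of_x_mul_mem r hr
  | more n ih _ =>
    obtain ⟨v, hv, w, hw, hvw⟩ := Submodule.mem_sup.1 hr
    obtain ⟨s, hs, w', hw', rfl⟩ := mem_pfaffianFiltration_add_two.1 hv
    obtain ⟨_, hdt, _, hcu, rfl⟩ := Submodule.mem_sup.1 (h.pow_add_two_le n hw')
    obtain ⟨t, ht, rfl⟩ := Ideal.mem_span_singleton_mul.1 hdt
    obtain ⟨u, -, rfl⟩ := Ideal.mem_span_singleton_mul.1 hcu
    obtain ⟨e, rfl⟩ := Ideal.mem_span_singleton.1 hw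
    obtain ⟨p, q, hpq⟩ := h.exists_of_x_dvd (s + t) (u + e) ⟨r, by linear_combination hvw⟩
    have hst := add_mem hs (pow_le_pfaffianFiltration (d := d) _ (Ideal.mul_le_right ht))
    have hp := ih (r := p) (by
      have := Submodule.add_mem_sup hst
        (Ideal.mul_mem_right (-q) _ (Ideal.mem_span_singleton_self c))
      convert this using 1
      linear_combination -hpq)
    obtain ⟨p₁, hp₁, _, hp₂, rfl⟩ := Submodule.mem_sup.1 hp
    obtain ⟨p₂, rfl⟩ := Ideal.mem_span_singleton.1 hp₂
    obtain ⟨f, hf⟩ := h.c_dvd_of_dvd_x_mul (r - d * (p₁ + c * p₂)) ⟨u + e + d * q, by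
      linear_combination -hvw + d * hpq⟩
    have : r = d * p₁ + c * (f + d * p₂) := by linear_combination hf
    rw [this]
    exact Submodule.add_mem_sup (Ideal.mem_sup_left
      (Ideal.mul_mem_mul (Ideal.mem_span_singleton_self d) hp₁))
      (Ideal.mul_mem_right _ _ (Ideal.mem_span_singleton_self c))

theorem mem_pfaffianFiltration_of_x_mul_mem [IsNoetherianRing R] [IsDomain R]
    {n : ℕ} {r : R} (hr : x * r ∈ pfaffianFiltration (Ideal.span {a, b, c}) d n) :
    r ∈ pfaffianFiltration (Ideal.span {a, b, c}) d n := by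
  have hc : c ∈ Ideal.span {a, b, c} := Ideal.subset_span (by simp)
  induction n generalizing r with
  | zero => trivial
  | succ n ih =>
    obtain ⟨s, hs, _, ht, rfl⟩ := Submodule.mem_sup.1
      (h.mem_pfaffianFiltration_sup_of_x_mul_mem (Ideal.mem_sup_left hr))
    obtain ⟨t, rfl⟩ := Ideal.mem_span_singleton.1 ht
    refine add_mem hs (mul_mem_pfaffianFiltration_succ hc
      (ih (h.mem_pfaffianFiltration_of_c_mul_mem ?_)))
    convert sub_mem hr (Ideal.mul_mem_left _ x hs) using 1
    ring

theorem mem_pfaffianFiltration_of_x_pow_mul_mem [IsNoetherianRing R] [IsDomain R]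
    {n k : ℕ} {r : R} (hr : x ^ k * r ∈ pfaffianFiltration (Ideal.span {a, b, c}) d n) :
    r ∈ pfaffianFiltration (Ideal.span {a, b, c}) d n := by
  induction k with
  | zero => simpa using hr
  | succ k ih =>
    exact ih (h.mem_pfaffianFiltration_of_x_mul_mem (by rwa [← mul_assoc, ← pow_succ']))

end IsPfaffianSystem

theorem mem_symbolicPower_iff {R : Type*} [CommRing R] {I : Ideal R} {n : ℕ} {r : R} :
    r ∈ symbolicPower I n ↔ ∀ p ∈ I.minimalPrimes, ∃ s ∉ p, s * r ∈ I ^ n := by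
  rw [symbolicPower, Ideal.mem_iInf, Subtype.forall]
  refine forall₂_congr fun p hp ↦ ?_
  have : p.IsPrime := hp.1.1
  rw [Ideal.mem_comap, IsLocalization.mem_map_algebraMap_iff p.primeCompl]
  constructor
  · rintro ⟨⟨⟨i, hi⟩, s⟩, his⟩
    rw [← map_mul, IsLocalization.eq_iff_exists p.primeCompl] at his
    obtain ⟨t, ht⟩ := his
    refine ⟨t * s, (t * s).2, ?_⟩
    rw [mul_assoc, mul_comm (s : R), ht]
    exact Ideal.mul_mem_left _ _ hi
  · rintro ⟨s, hs, hsr⟩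
    exact ⟨⟨⟨s * r, hsr⟩, s, hs⟩, by rw [← map_mul, mul_comm]⟩

namespace IsPfaffianSystem

variable {R : Type*} [CommRing R] [IsLocalRing R] [IsNoetherianRing R]
  {x y z a b c d : R} (h : IsPfaffianSystem x y z a b c d)

include h

theorem maximalIdeal_notMem_minimalPrimes [IsDomain R] :
    maximalIdeal R ∉ (Ideal.span {a, b, c}).minimalPrimes := by
  intro hm
  have hx : x ∈ (Ideal.span {a, b, c}).radical := by
    rw [Ideal.radical_eq_sInf, Submodule.mem_sInf]
    rintro q ⟨hq, hqp⟩
    exact hm.2 ⟨hqp, hq⟩ (IsLocalRing.le_maximalIdeal hqp.ne_top) h.x_mem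
  obtain ⟨k, hk⟩ := hx
  have h1 : (1 : R) ∈ pfaffianFiltration (Ideal.span {a, b, c}) d 1 :=
    h.mem_pfaffianFiltration_of_x_pow_mul_mem (k := k) (by rwa [mul_one])
  exact (Ideal.ne_top_iff_one _).1 (maximalIdeal.isMaximal R).ne_top (h.le_maximalIdeal h1)

theorem x_mem_of_isPrime {q p : Ideal R} [q.IsPrime]
    (hp : p ∈ (Ideal.span {a, b, c}).minimalPrimes) (hpq : p ≤ q) (hne : p ≠ q) : x ∈ q := by
  by_contra hx
  have hp' : p.IsPrime := hp.1.1
  have hq : q < maximalIdeal R := (IsLocalRing.le_maximalIdeal Ideal.IsPrime.ne_top').lt_of_ne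
    fun hq ↦ hx (hq ▸ h.x_mem)
  have hm : maximalIdeal R ∈ (Ideal.span (insert x (p : Set R))).minimalPrimes := by
    refine ⟨⟨inferInstance, Ideal.span_le.2 (Set.insert_subset h.x_mem (hpq.trans hq.le))⟩,
      fun q' hq' _ ↦ ?_⟩
    have := Ideal.span_le.1 hq'.2
    exact h.le_of_isPrime q' hq'.1
      (hp.1.2.trans fun s hs ↦ this (Set.mem_insert_of_mem _ hs)) (this (Set.mem_insert _ _))
  have := Ideal.mem_minimalPrimes_span_of_mem_minimalPrimes_span_insert hq x p hm p hpq
    fun s hs ↦ Ideal.le_radical (Ideal.subset_span (Set.mem_insert_of_mem _ hs))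
  rw [Ideal.span_eq] at this
  exact hne (le_antisymm hpq (this.2 ⟨hp', le_rfl⟩ hpq))

theorem symbolicPower_eq [IsDomain R] (n : ℕ) :
    symbolicPower (Ideal.span {a, b, c}) n = pfaffianFiltration (Ideal.span {a, b, c}) d n := by
  ext r
  rw [mem_symbolicPower_iff]
  constructor
  · intro hr
    let C : Ideal R := (pfaffianFiltration (Ideal.span {a, b, c}) d n).colon {r}
    have hC : ∀ {s}, s ∈ C ↔ s * r ∈ pfaffianFiltration (Ideal.span {a, b, c}) d n :=
      Submodule.mem_colon_singleton
    have hIC : Ideal.span {a, b, c} ^ n ≤ C := fun s hs ↦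
      hC.2 (Ideal.mul_mem_right _ _ (pow_le_pfaffianFiltration n hs))
    have hx : x ∈ C.radical := by
      rw [Ideal.radical_eq_sInf, Submodule.mem_sInf]
      rintro q ⟨hCq, hq⟩
      have hIq : Ideal.span {a, b, c} ≤ q := hq.le_of_pow_le (hIC.trans hCq)
      obtain ⟨p, hp, hpq⟩ := Ideal.exists_minimalPrimes_le hIq
      refine h.x_mem_of_isPrime hp hpq ?_
      rintro rfl
      obtain ⟨s, hs, hsr⟩ := hr p hp
      exact hs (hCq (hC.2 (pow_le_pfaffianFiltration n hsr)))
    obtain ⟨k, hk⟩ := hx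
    exact h.mem_pfaffianFiltration_of_x_pow_mul_mem (hC.1 hk)
  · intro hr p hp
    have hp' : p.IsPrime := hp.1.1
    obtain ⟨s, hs, hsp⟩ := Set.exists_of_ssubset
      ((IsLocalRing.le_maximalIdeal hp'.ne_top).lt_of_ne
        fun hpm ↦ h.maximalIdeal_notMem_minimalPrimes (hpm ▸ hp))
    exact ⟨s ^ n, fun hsn ↦ hsp (hp'.mem_of_pow_mem n hsn),
      pow_mul_pfaffianFiltration_le h.maximalIdeal_mul_d_le n
        (Ideal.mul_mem_mul (Ideal.pow_mem_pow hs n) hr)⟩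

end IsPfaffianSystem

/-- The length of the `R`-module `K / (J ∩ K)`. -/
noncomputable def relLength {R : Type*} [CommRing R] (J K : Ideal R) : ℕ∞ :=
  Module.length R (K ⧸ Submodule.comap K.subtype J)

section

variable {R : Type*} [CommRing R]

theorem relLength_self (J : Ideal R) : relLength J J = 0 := by
  rw [relLength, Module.length_eq_zero_iff, Submodule.Quotient.subsingleton_iff,
    Submodule.comap_subtype_self]

theorem relLength_add_relLength {J K L : Ideal R} (hJK : J ≤ K) (hKL : K ≤ L) :
    relLength J K + relLength K L = relLength J L := by
  refine (Module.length_eq_add_of_exact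
    (Submodule.mapQ (Submodule.comap K.subtype J) (Submodule.comap L.subtype J)
      (Submodule.inclusion hKL) fun _ hr ↦ hr)
    (Submodule.mapQ (Submodule.comap L.subtype J) (Submodule.comap L.subtype K)
      LinearMap.id fun _ hr ↦ hJK hr) ?_ ?_ ?_).symm
  · rw [← LinearMap.ker_eq_bot, LinearMap.ker_eq_bot']
    rintro ⟨r, hr⟩ h
    have hJ : r ∈ J := (Submodule.Quotient.mk_eq_zero (Submodule.comap L.subtype J)).1 h
    exact (Submodule.Quotient.mk_eq_zero (Submodule.comap K.subtype J)).2 hJ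
  · rintro ⟨r⟩
    exact ⟨Submodule.Quotient.mk r, rfl⟩
  · rintro ⟨r⟩
    constructor
    · intro h
      have hK : (r : R) ∈ K := (Submodule.Quotient.mk_eq_zero (Submodule.comap L.subtype K)).1 h
      exact ⟨Submodule.Quotient.mk ⟨r, hK⟩, rfl⟩
    · rintro ⟨⟨s⟩, hs⟩
      have hsr : (s : R) - r ∈ J := (Submodule.Quotient.eq (Submodule.comap L.subtype J)).1 hs
      have hK : (r : R) ∈ K := by simpa using sub_mem s.2 (hJK hsr)
      exact (Submodule.Quotient.mk_eq_zero (Submodule.comap L.subtype K)).2 hK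

theorem relLength_eq_of_mul {J K J' K' : Ideal R} (d : R) (hd : ∀ r ∈ K, d * r ∈ K')
    (hs : ∀ s ∈ K', ∃ r ∈ K, s - d * r ∈ J') (hJ : ∀ r ∈ K, d * r ∈ J' ↔ r ∈ J) :
    relLength J' K' = relLength J K := by
  let f : K →ₗ[R] K' ⧸ Submodule.comap K'.subtype J' :=
    (Submodule.mkQ _).comp ((LinearMap.mulLeft R d).restrict hd)
  have hf : Function.Surjective f := by
    rintro ⟨s⟩
    obtain ⟨r, hr, hsr⟩ := hs s s.2
    exact ⟨⟨r, hr⟩, ((Submodule.Quotient.eq (Submodule.comap K'.subtype J')).2 hsr).symm⟩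
  have hker : LinearMap.ker f = Submodule.comap K.subtype J := by
    ext r
    exact (Submodule.Quotient.mk_eq_zero (Submodule.comap K'.subtype J')).trans (hJ r r.2)
  rw [relLength, relLength, ← hker]
  exact (f.quotKerEquivOfSurjective hf).length_eq.symm

theorem relLength_top (J : Ideal R) : relLength J ⊤ = Module.length R (R ⧸ J) := by
  have e : Submodule.map (Submodule.topEquiv (R := R) (M := R)).toLinearMap
      (Submodule.comap (⊤ : Submodule R R).subtype J) = J := by
    ext r
    simp
  exact (Submodule.Quotient.equiv _ _ _ e).length_eq

theorem relLength_maximalIdeal_top [IsLocalRing R] : relLength (maximalIdeal R) ⊤ = 1 := by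
  rw [relLength_top, Module.length_eq_one_iff, isSimpleModule_iff_isCoatom]
  exact Ideal.isMaximal_def.1 (maximalIdeal.isMaximal R)

theorem hasLength_of_length_eq {M : Type*} [AddCommGroup M] [Module R M] {n : ℕ}
    (h : Module.length R M = n) : HasLength R M n := by
  obtain ⟨s, hs₀, hs₁⟩ := isFiniteLength_iff_exists_compositionSeries.1
    (Module.length_ne_top_iff.1 (h ▸ ENat.natCast_ne_top n))
  refine ⟨s, hs₀, hs₁, ?_⟩
  rw [← Module.length_compositionSeries s hs₀ hs₁] at h
  exact_mod_cast h

end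

namespace IsPfaffianSystem

variable {R : Type*} [CommRing R] [IsLocalRing R] {x y z a b c d : R}
  (h : IsPfaffianSystem x y z a b c d)

include h

theorem span_pair_le_maximalIdeal : Ideal.span {x, y} ≤ maximalIdeal R :=
  h.maximalIdeal_eq ▸ Ideal.span_mono (by simp [Set.insert_subset_insert])

theorem relLength_span_pair_pow [IsNoetherianRing R] [IsDomain R] (n : ℕ) :
    relLength (maximalIdeal R * Ideal.span {a, b} ^ n ⊔ Ideal.span {c})
      (Ideal.span {a, b} ^ n ⊔ Ideal.span {c}) = (n + 1 : ℕ) := by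
  induction n with
  | zero =>
    have hc : Ideal.span {c} ≤ maximalIdeal R := (Ideal.span_singleton_le_iff_mem _).2 h.c_mem
    simpa [sup_eq_left.2 hc] using relLength_maximalIdeal_top (R := R)
  | succ n ih =>
    have hc := Ideal.mem_span_singleton_self c
    have hb := Ideal.mem_span_singleton_self b
    have hbN : Ideal.span {b} * Ideal.span {a, b} ^ n ≤ Ideal.span {a, b} ^ (n + 1) := by
      rw [pow_succ']
      exact Ideal.mul_mono_left (Ideal.span_mono (by simp))
    have ha : ∀ k, a ^ k ∈ Ideal.span {a, b} ^ k :=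
      fun k ↦ Ideal.pow_mem_pow (Ideal.subset_span (by simp)) k
    have hbot : relLength (maximalIdeal R * Ideal.span {a, b} ^ (n + 1) ⊔ Ideal.span {c})
        (Ideal.span {b} * Ideal.span {a, b} ^ n ⊔
          (maximalIdeal R * Ideal.span {a, b} ^ (n + 1) ⊔ Ideal.span {c})) = (n + 1 : ℕ) := by
      rw [← ih]
      refine relLength_eq_of_mul b ?_ ?_ ?_
      · intro r hr
        obtain ⟨w, hw, e, he, rfl⟩ := Submodule.mem_sup.1 hr
        rw [mul_add]
        exact Submodule.add_mem_sup (Ideal.mul_mem_mul hb hw)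
          (Ideal.mem_sup_right (Ideal.mul_mem_left _ _ he))
      · intro s hs
        obtain ⟨_, hv, e, he, rfl⟩ := Submodule.mem_sup.1 hs
        obtain ⟨w, hw, rfl⟩ := Ideal.mem_span_singleton_mul.1 hv
        exact ⟨w, Ideal.mem_sup_left hw, by rwa [add_sub_cancel_left]⟩
      · intro r _
        constructor
        · intro hbr
          obtain ⟨w, hw, _, he, hwe⟩ := Submodule.mem_sup.1 hbr
          obtain ⟨q, hq, t, ht, rfl⟩ := Ideal.exists_of_mem_mul_span_pair_pow_succ hw
          obtain ⟨e, rfl⟩ := Ideal.mem_span_singleton.1 he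
          obtain ⟨u, hu, v, -, huv⟩ := h.exists_mul_a_eq
            (h.mem_of_mul_a_pow (n + 1) q (r - t) (-e) (by linear_combination hwe))
          obtain ⟨f, hf⟩ := h.c_dvd_of_dvd_b_mul (r := r - t - u * a ^ n)
            ⟨v * a ^ n + e, by linear_combination -hwe + a ^ n * huv⟩
          have : r = t + u * a ^ n + c * f := by linear_combination hf
          rw [this]
          exact Submodule.add_mem_sup (add_mem ht (Ideal.mul_mem_mul hu (ha n)))
            (Ideal.mul_mem_right _ _ hc)
        · intro hr
          obtain ⟨w, hw, e, he, rfl⟩ := Submodule.mem_sup.1 hr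
          rw [mul_add]
          refine Submodule.add_mem_sup ?_ (Ideal.mul_mem_left _ _ he)
          have := Ideal.mul_mem_mul hb hw
          rw [mul_left_comm] at this
          exact Ideal.mul_mono_right hbN this
    have htop : relLength (Ideal.span {b} * Ideal.span {a, b} ^ n ⊔
        (maximalIdeal R * Ideal.span {a, b} ^ (n + 1) ⊔ Ideal.span {c}))
        (Ideal.span {a, b} ^ (n + 1) ⊔ Ideal.span {c}) = 1 := by
      rw [← relLength_maximalIdeal_top (R := R)]
      refine relLength_eq_of_mul (a ^ (n + 1)) ?_ ?_ ?_
      · exact fun r _ ↦ Ideal.mem_sup_left (Ideal.mul_mem_right _ _ (ha (n + 1)))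
      · intro s hs
        obtain ⟨w, hw, e, he, rfl⟩ := Submodule.mem_sup.1 hs
        rw [← Ideal.top_mul (Ideal.span {a, b} ^ (n + 1))] at hw
        obtain ⟨q, -, t, ht, rfl⟩ := Ideal.exists_of_mem_mul_span_pair_pow_succ hw
        rw [Ideal.top_mul] at ht
        refine ⟨q, trivial, ?_⟩
        have : q * a ^ (n + 1) + b * t + e - a ^ (n + 1) * q = b * t + e := by ring
        rw [this]
        exact Submodule.add_mem_sup (Ideal.mul_mem_mul hb ht) (Ideal.mem_sup_right he)
      · intro r _
        constructor
        · intro hr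
          obtain ⟨_, hu, _, hv, huv⟩ := Submodule.mem_sup.1 hr
          obtain ⟨u, -, rfl⟩ := Ideal.mem_span_singleton_mul.1 hu
          obtain ⟨w, hw, _, he, rfl⟩ := Submodule.mem_sup.1 hv
          obtain ⟨q, hq, t, -, rfl⟩ := Ideal.exists_of_mem_mul_span_pair_pow_succ hw
          obtain ⟨e, rfl⟩ := Ideal.mem_span_singleton.1 he
          have hrq := h.span_pair_le_maximalIdeal
            (h.mem_of_mul_a_pow (n + 1) (r - q) (u + t) e (by linear_combination -huv))
          simpa using add_mem hrq hq
        · intro hr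
          rw [mul_comm (a ^ (n + 1))]
          exact Ideal.mem_sup_right (Ideal.mem_sup_left (Ideal.mul_mem_mul hr (ha (n + 1))))
    rw [← relLength_add_relLength (le_sup_right (a := Ideal.span {b} * Ideal.span {a, b} ^ n))
      (sup_le (hbN.trans le_sup_left) (sup_le_sup_right Ideal.mul_le_right _)), hbot, htop]
    rfl

theorem relLength_pow [IsNoetherianRing R] [IsDomain R] (n : ℕ) :
    relLength (maximalIdeal R * Ideal.span {a, b, c} ^ n) (Ideal.span {a, b, c} ^ n) =
      ((n + 2).choose 2 : ℕ) := by
  induction n with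
  | zero => simpa using relLength_maximalIdeal_top (R := R)
  | succ n ih =>
    have hc := Ideal.mem_span_singleton_self c
    have hcI : c ∈ Ideal.span {a, b, c} := Ideal.subset_span (by simp)
    have hI := Ideal.mul_span_triple_pow_succ a b c ⊤ n
    rw [Ideal.top_mul, Ideal.top_mul, Ideal.top_mul] at hI
    have hN : Ideal.span {a, b} ^ (n + 1) ≤ Ideal.span {a, b, c} ^ (n + 1) :=
      Ideal.pow_right_mono (Ideal.span_mono (by simp [Set.insert_subset_insert])) _
    have hcle : Ideal.span {c} * Ideal.span {a, b, c} ^ n ≤ Ideal.span {a, b, c} ^ (n + 1) :=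
      hI ▸ le_sup_right
    have hbot : relLength (maximalIdeal R * Ideal.span {a, b, c} ^ (n + 1))
        (Ideal.span {c} * Ideal.span {a, b, c} ^ n ⊔
          maximalIdeal R * Ideal.span {a, b, c} ^ (n + 1)) = ((n + 2).choose 2 : ℕ) := by
      rw [← ih]
      refine relLength_eq_of_mul c ?_ ?_ ?_
      · exact fun r hr ↦ Ideal.mem_sup_left (Ideal.mul_mem_mul hc hr)
      · intro s hs
        obtain ⟨_, hv, e, he, rfl⟩ := Submodule.mem_sup.1 hs
        obtain ⟨w, hw, rfl⟩ := Ideal.mem_span_singleton_mul.1 hv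
        exact ⟨w, hw, by rwa [add_sub_cancel_left]⟩
      · refine fun r _ ↦ ⟨h.mem_mul_pow_of_c_mul_mem le_rfl, fun hr ↦ ?_⟩
        have := Ideal.mul_mem_mul hcI hr
        rwa [mul_left_comm, ← pow_succ'] at this
    have htop : relLength (Ideal.span {c} * Ideal.span {a, b, c} ^ n ⊔
        maximalIdeal R * Ideal.span {a, b, c} ^ (n + 1)) (Ideal.span {a, b, c} ^ (n + 1)) =
        (n + 2 : ℕ) := by
      rw [← h.relLength_span_pair_pow (n + 1)]
      refine (relLength_eq_of_mul 1 ?_ ?_ ?_).symm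
      · intro r hr
        rw [hI] at hr
        rw [one_mul]
        exact (sup_le_sup_left Ideal.mul_le_left _ : _ ≤ _ ⊔ Ideal.span {c}) hr
      · intro s hs
        obtain ⟨w, hw, e, he, rfl⟩ := Submodule.mem_sup.1 hs
        exact ⟨w, hN hw, Ideal.mem_sup_right (by rwa [one_mul, add_sub_cancel_left])⟩
      · intro r hr
        rw [one_mul]
        constructor
        · intro hr'
          obtain ⟨w, hw, _, he, rfl⟩ := Submodule.mem_sup.1 hr'
          obtain ⟨e, rfl⟩ := Ideal.mem_span_singleton.1 he
          have hce := (Submodule.add_mem_iff_right _ (hN (Ideal.mul_le_right hw))).1 hr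
          exact add_mem (Ideal.mem_sup_right (Ideal.mul_mono_right hN hw))
            (Ideal.mem_sup_left (Ideal.mul_mem_mul hc (h.mem_pow_of_c_mul_mem hce)))
        · intro hr'
          rw [Ideal.mul_span_triple_pow_succ] at hr'
          have hle : Ideal.span {c} * Ideal.span {a, b, c} ^ n ⊔
              (maximalIdeal R * Ideal.span {a, b} ^ (n + 1) ⊔
                Ideal.span {c} * (maximalIdeal R * Ideal.span {a, b, c} ^ n)) ≤
              maximalIdeal R * Ideal.span {a, b} ^ (n + 1) ⊔ Ideal.span {c} :=
            sup_le (Ideal.mul_le_left.trans le_sup_right)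
              (sup_le_sup_left Ideal.mul_le_left _)
          exact hle hr'
    rw [← relLength_add_relLength le_sup_right (sup_le hcle Ideal.mul_le_right), hbot, htop,
      ← Nat.cast_add, Nat.choose_succ_succ' (n + 2) 1, Nat.choose_one_right, add_comm]

theorem relLength_pfaffianFiltration [IsNoetherianRing R] [IsDomain R] (n : ℕ) :
    relLength (Ideal.span {a, b, c} ^ n) (pfaffianFiltration (Ideal.span {a, b, c}) d n) =
      (∑ k ∈ Finset.Icc 1 (n / 2), (n - 2 * k + 2).choose 2 : ℕ) := by
  induction n using Nat.twoStepInduction with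
  | zero => simpa [pfaffianFiltration] using relLength_self (⊤ : Ideal R)
  | one => simpa [pfaffianFiltration] using relLength_self (Ideal.span {a, b, c})
  | more n ih _ =>
    have hd : relLength (Ideal.span {a, b, c} ^ (n + 2))
        (pfaffianFiltration (Ideal.span {a, b, c}) d (n + 2)) =
        relLength (maximalIdeal R * Ideal.span {a, b, c} ^ n)
          (pfaffianFiltration (Ideal.span {a, b, c}) d n) := by
      refine relLength_eq_of_mul d ?_ ?_ fun r _ ↦ h.d_mul_mem_pow_iff
      · exact fun r hr ↦ mem_pfaffianFiltration_add_two.2 ⟨r, hr, 0, zero_mem _, by ring⟩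
      · intro s hs
        obtain ⟨r, hr, w, hw, rfl⟩ := mem_pfaffianFiltration_add_two.1 hs
        exact ⟨r, hr, by rwa [add_sub_cancel_left]⟩
    rw [hd, ← relLength_add_relLength Ideal.mul_le_right (pow_le_pfaffianFiltration n), ih,
      h.relLength_pow, ← Nat.cast_add, Nat.add_div_right n two_pos]
    congr 1
    rw [← Finset.Ico_add_one_right_eq_Icc, ← Finset.Ico_add_one_right_eq_Icc,
      Finset.sum_eq_sum_Ico_succ_bot (b := (n / 2).succ + 1) (by simp), ← Finset.sum_Ico_add']
    exact congrArg₂ _ rfl (Finset.sum_congr rfl fun k _ ↦ by congr 1; omega)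

end IsPfaffianSystem

/-- Let `R` be a 3-dimensional regular local ring with `m = (x, y, z)` and
`I = (z² - x²y, x³ - yz, y² - xz)`.  For every `n ≥ 1`,
`length(I⁽ⁿ⁾/Iⁿ) = Σ_{k=1}^{⌊n/2⌋} C(n - 2k + 2, 2)`. -/
theorem symbolic_power_quotient_length
    {R : Type*} [CommRing R] [IsNoetherianRing R] [IsLocalRing R]
    (hdim : ringKrullDim R = 3)
    (x y z : R) (hreg : maximalIdeal R = Ideal.span {x, y, z})
    (I : Ideal R)
    (hI : I = Ideal.span {z ^ 2 - x ^ 2 * y, x ^ 3 - y * z, y ^ 2 - x * z}) :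
    ∀ n : ℕ, 1 ≤ n →
      HasLength R
        (↥(symbolicPower I n) ⧸
          Submodule.comap (symbolicPower I n).subtype ((I ^ n : Ideal R) : Submodule R R))
        (∑ k ∈ Finset.Icc 1 (n / 2), (n - 2 * k + 2).choose 2) := by
  intro n _
  obtain ⟨_, h⟩ := isPfaffianSystem_of_ringKrullDim_eq_three hdim x y z hreg
  have hI' : I = Ideal.span {x ^ 2 * y - z ^ 2, y * z - x ^ 3, x * z - y ^ 2} := by
    rw [hI, ← neg_sub (x ^ 2 * y), ← neg_sub (y * z), ← neg_sub (x * z)]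
    simp only [Ideal.span_insert, Ideal.span_singleton_neg]
  rw [hI']
  refine hasLength_of_length_eq ?_
  rw [h.symbolicPower_eq]
  exact h.relLength_pfaffianFiltration n
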